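/- There exists a sequence of carefully synchronizing PFAs with two symbols, n states and shortest carefully synchronizing word length Ω(2^{n/3}/n^{3/2}): there exist a constant c > 0 and an integer N such that for every n ≥ N there is a PFA with n states and an alphabet of 2 symbols which is carefully synchronizing and whose shortest carefully synchronizing word has length at least c·2^{n/3}/n^{3/2}. -/

import Mathlib

/-- One step of a PFA on an `Option` state. -/
def pfaStep {Q σ : Type*} (δ : Q → σ → Option Q) (o : Option Q) (a : σ) : Option Q :=
  o.bind fun q => δ q a

/-- The (partial) state reached from `q` after reading word `w` in the PFA `δ`. -/
def pfaRun {Q σ : Type*} (δ : Q → σ → Option Q) (q : Q) (w : List σ) : Option Q :=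
  w.foldl (pfaStep δ) (some q)

/-- A word `w` is carefully synchronizing for the PFA `δ`. -/
def IsCareSyncWord {Q σ : Type*} (δ : Q → σ → Option Q) (w : List σ) : Prop :=
  ∃ qs : Q, ∀ q : Q, pfaRun δ q w = some qs

/-- A PFA is transitive if every state can be reached from every state by some word. -/
def PFATransitive {Q σ : Type*} (δ : Q → σ → Option Q) : Prop :=
  ∀ q q' : Q, ∃ w : List σ, pfaRun δ q w = some q'

theorem pfaRun_nil {Q σ : Type*} (δ : Q → σ → Option Q) (q : Q) : pfaRun δ q [] = some q := rfl

theorem foldl_pfaStep_none {Q σ : Type*} (δ : Q → σ → Option Q) (w : List σ) :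
    w.foldl (pfaStep δ) none = none := by
  induction w with
  | nil => rfl
  | cons a w ih => exact ih

theorem pfaRun_cons {Q σ : Type*} (δ : Q → σ → Option Q) (q : Q) (a : σ) (w : List σ) :
    pfaRun δ q (a :: w) = (δ q a).bind fun q' => pfaRun δ q' w := by
  change w.foldl (pfaStep δ) (δ q a) = _
  cases δ q a with
  | none => exact foldl_pfaStep_none δ w
  | some q' => rfl

theorem pfaRun_append {Q σ : Type*} (δ : Q → σ → Option Q) (q : Q) (u w : List σ) :
    pfaRun δ q (u ++ w) = (pfaRun δ q u).bind fun q' => pfaRun δ q' w := by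
  induction u generalizing q with
  | nil => rfl
  | cons a u ih =>
    rw [List.cons_append, pfaRun_cons, pfaRun_cons]
    cases δ q a with
    | none => rfl
    | some q' => exact ih q'

/-- Renaming the states of a PFA along an equivalence. -/
def pfaMap {Q Q' σ : Type*} (e : Q ≃ Q') (δ : Q → σ → Option Q) : Q' → σ → Option Q' :=
  fun p a => (δ (e.symm p) a).map e

theorem pfaRun_pfaMap {Q Q' σ : Type*} (e : Q ≃ Q') (δ : Q → σ → Option Q) (p : Q')
    (w : List σ) : pfaRun (pfaMap e δ) p w = (pfaRun δ (e.symm p) w).map e := by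
  induction w generalizing p with
  | nil => simp [pfaRun_nil]
  | cons a w ih =>
    rw [pfaRun_cons, pfaRun_cons, pfaMap]
    cases δ (e.symm p) a with
    | none => rfl
    | some q => simp [ih]

theorem isCareSyncWord_pfaMap {Q Q' σ : Type*} (e : Q ≃ Q') (δ : Q → σ → Option Q)
    (w : List σ) : IsCareSyncWord (pfaMap e δ) w ↔ IsCareSyncWord δ w := by
  constructor
  · rintro ⟨p, hp⟩
    refine ⟨e.symm p, fun q => ?_⟩
    obtain ⟨q', hq', rfl⟩ :=
      Option.map_eq_some_iff.1 ((pfaRun_pfaMap e δ _ w).symm.trans (hp (e q)))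
    simpa using hq'
  · rintro ⟨q, hq⟩
    exact ⟨e q, fun p => by rw [pfaRun_pfaMap, hq]; rfl⟩

/-! The automaton simulates a base-4 counter with `k + 1` digits, written on a cyclic tape of `k + 2`
cells whose remaining cell carries a marker. Every tape cell and the finite control is
represented by one active state. A word is read as a sequence of blocks `0 ^ i 1`, the number
`i` (capped at 7) being a command executed by the control and by the cell under the head, after
which the tape moves on by one cell. Commands which do not agree with the control or with the
scanned symbol are undefined, so that counting is forced. Command 7 is always defined and
restarts the initialization, which erases the whole tape before the counting starts again. -/

namespace CounterPFA

/-- Tape symbols: `none` is the marker. -/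
abbrev Sym := Option (Fin 4)

/-- The modes of the control which remember the number of zeros read in the current block. -/
inductive Mode
  | armed
  | carry
  | copy
  | fail

/-- States of the automaton. -/
inductive State (k r : ℕ)
  | cell (x : Sym) (p : Fin (k + 1))
  | head (x : Sym) (i : Fin 8)
  | ctrl (q : Mode) (i : Fin 8)
  | chain (j : Fin (k + 1))
  | sink
  | extra (e : Fin r)

open State Mode

/-- Counting zeros up to 7. -/
def bump (i : Fin 8) : Fin 8 := if i = 7 then 7 else i + 1

/-- The symbol replacing `x` under command `i`: 0 and 7 erase, 1 sets the marker, 2 is a digit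
overflow, 3 a digit increment, 4 copies a digit, and 5 copies the marker. -/
def write : Fin 8 → Sym → Option Sym
  | 0, _ => some (some 0)
  | 1, some 0 => some none
  | 2, some 3 => some (some 0)
  | 3, some d => if d = 3 then none else some (some (d + 1))
  | 4, some d => some (some d)
  | 5, none => some none
  | 7, _ => some (some 0)
  | _, _ => none

/-- The action of command `i` on the control. -/
def control {k r : ℕ} : Mode → Fin 8 → Option (State k r)
  | _, 7 => some (chain 0)
  | armed, 1 => some (ctrl carry 0)
  | carry, 2 => some (ctrl carry 0)
  | carry, 3 => some (ctrl copy 0)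
  | carry, 5 => some sink
  | copy, 4 => some (ctrl copy 0)
  | copy, 5 => some (ctrl carry 0)
  | _, _ => none

/-- The transition function. Command 6 removes the scanned cell. -/
def step {k r : ℕ} : State k r → Fin 2 → Option (State k r)
  | cell x p, 0 => some (cell x p)
  | cell x p, 1 => some (Fin.cases (head x 0) (fun p' => cell x p'.castSucc) p)
  | head x i, 0 => some (head x (bump i))
  | head x i, 1 => if i = 6 then some sink else (write i x).map fun y => cell y (Fin.last k)
  | ctrl q i, 0 => some (ctrl q (bump i))
  | ctrl q i, 1 => control q i
  | chain _, 0 => some (ctrl fail 1)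
  | chain j, 1 =>
    if h : j.val < k then some (chain ⟨j.val + 1, Nat.succ_lt_succ h⟩) else some (ctrl armed 0)
  | sink, _ => some sink
  | extra _, _ => some sink

/-- `OnTape l i q`: the state `q` is active if the tape, starting at the head, reads `l` and `i`
zeros have been read in the current block. -/
inductive OnTape {k r : ℕ} (l : List Sym) (i : Fin 8) : State k r → Prop
  | head (x : Sym) (h : l[0]? = some x) : OnTape l i (head x i)
  | cell (x : Sym) (p : Fin (k + 1)) (h : l[p.val + 1]? = some x) : OnTape l i (cell x p)

variable {k r : ℕ}

theorem write_two : ∀ {x y : Sym}, write 2 x = some y → x = some 3 ∧ y = some 0 := by decide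

theorem write_three : ∀ {x y : Sym}, write 3 x = some y →
    ∃ d, d ≠ 3 ∧ x = some d ∧ y = some (d + 1) := by decide

theorem write_four : ∀ {x y : Sym}, write 4 x = some y → ∃ d, x = some d ∧ y = some d := by
  decide

theorem write_five : ∀ {x y : Sym}, write 5 x = some y → x = none ∧ y = none := by decide

theorem pfaRun_sink (w : List (Fin 2)) : pfaRun (step (k := k) (r := r)) sink w = some sink := by
  induction w with
  | nil => rfl
  | cons a w ih => rw [pfaRun_cons]; exact ih

section LowerBound

theorem onTape_zero {l : List Sym} {i : Fin 8} {w : List (Fin 2)}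
    (h : ∀ q : State k r, OnTape l i q → pfaRun step q (0 :: w) = some sink) :
    ∀ q : State k r, OnTape l (bump i) q → pfaRun step q w = some sink := by
  rintro _ (⟨x, hx⟩ | ⟨x, p, hx⟩)
  · exact h _ (.head x hx)
  · exact h _ (.cell x p hx)

theorem onTape_one {x : Sym} {l : List Sym} {i : Fin 8} {w : List (Fin 2)}
    (hl : l.length = k + 1) (hi : i ≠ 6)
    (h : ∀ q : State k r, OnTape (x :: l) i q → pfaRun step q (1 :: w) = some sink) :
    ∃ y, write i x = some y ∧
      ∀ q : State k r, OnTape (l ++ [y]) 0 q → pfaRun step q w = some sink := by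
  have hx := h _ (.head x rfl)
  rw [pfaRun_cons] at hx
  simp only [step, if_neg hi] at hx
  cases hy : write i x with
  | none => simp [hy] at hx
  | some y =>
    refine ⟨y, rfl, ?_⟩
    rintro _ (⟨z, hz⟩ | ⟨z, p, hz⟩)
    · have := h _ (.cell z 0 (by simpa [List.getElem?_append, hl] using hz))
      simpa [pfaRun_cons, step] using this
    · induction p using Fin.lastCases with
      | last =>
        obtain rfl : y = z := by simpa [List.getElem?_append, hl] using hz
        simpa [hy] using hx
      | cast p =>
        have := h _ (.cell z p.succ (by simpa [List.getElem?_append, hl] using hz))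
        simpa [pfaRun_cons, step] using this

/-- `Progress c l i v`: in a configuration with control `c`, tape `l` and `i` zeros read in the
current block, the value of the counter is `v`. -/
inductive Progress : State k r → List Sym → Fin 8 → ℕ → Prop
  | chain (j : Fin (k + 1)) (t : List Sym) (ht : t.length + j.val = k + 1) :
      Progress (chain j) (t ++ List.replicate (j.val + 1) (some 0)) 0 0
  | fail (l : List Sym) (i : Fin 8) (hl : l.length = k + 2) : Progress (ctrl fail i) l i 0
  | armed (i : Fin 8) : Progress (ctrl armed i) (List.replicate (k + 2) (some 0)) i 0
  | carry (U : List (Fin 4)) (j : ℕ) (i : Fin 8) (hU : U.length + j = k + 1) :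
      Progress (ctrl carry i) (U.map some ++ none :: List.replicate j (some 0)) i
        (Nat.ofDigits 4 ((List.replicate j 3 ++ U).map Fin.val))
  | copy (U P : List (Fin 4)) (i : Fin 8) (hU : U.length + P.length = k + 1) :
      Progress (ctrl copy i) (U.map some ++ none :: P.map some) i
        (Nat.ofDigits 4 ((P ++ U).map Fin.val))

theorem Progress.length_eq {c : State k r} {l : List Sym} {i : Fin 8} {v : ℕ}
    (h : Progress c l i v) : l.length = k + 2 := by
  cases h with
  | fail _ _ hl => exact hl
  | _ => simp <;> omega

theorem ofDigits_increment (j : ℕ) (d : Fin 4) (hd : d ≠ 3) (U : List (Fin 4)) :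
    Nat.ofDigits 4 ((List.replicate j 0 ++ (d + 1) :: U).map Fin.val) =
      Nat.ofDigits 4 ((List.replicate j 3 ++ d :: U).map Fin.val) + 1 := by
  induction j with
  | zero =>
    have : (d + 1).val = d.val + 1 := by revert d; decide
    simp [Nat.ofDigits_cons, this]
    omega
  | succ j ih =>
    simp only [List.replicate_succ, List.cons_append, List.map_cons, Nat.ofDigits_cons, ih]
    simp
    omega

theorem ofDigits_replicate_three (j : ℕ) :
    Nat.ofDigits 4 ((List.replicate j (3 : Fin 4)).map Fin.val) + 1 = 4 ^ j := by
  induction j with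
  | zero => simp
  | succ j ih =>
    simp only [List.replicate_succ, List.map_cons, Nat.ofDigits_cons, pow_succ, ← ih]
    simp
    omega

theorem ofDigits_replicate_zero (j : ℕ) :
    Nat.ofDigits 4 ((List.replicate j (0 : Fin 4)).map Fin.val) = 0 := by
  induction j with
  | zero => simp
  | succ j ih => simp [List.replicate_succ, Nat.ofDigits_cons] at ih ⊢

theorem le_length_of_progress {c : State k r} {l : List Sym} {i : Fin 8} {v : ℕ}
    {w : List (Fin 2)} (h : Progress c l i v) (hc : pfaRun step c w = some sink)
    (hl : ∀ q : State k r, OnTape l i q → pfaRun step q w = some sink) :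
    4 ^ (k + 1) ≤ v + w.length := by
  induction w generalizing c l i v with
  | nil => cases h <;> simp [pfaRun_nil] at hc
  | cons s w ih =>
    rw [List.length_cons]
    obtain rfl | rfl : s = 0 ∨ s = 1 := by clear hc hl; revert s; decide
    · have hl' := onTape_zero hl
      cases h with
      | chain j t ht =>
        have := ih (.fail _ 1 (by simp; omega)) hc hl'
        omega
      | fail l i hl => have := ih (.fail _ _ hl) hc hl'; omega
      | armed i => have := ih (.armed _) hc hl'; omega
      | carry U j i hU => have := ih (.carry U j _ hU) hc hl'; omega
      | copy U P i hU => have := ih (.copy U P _ hU) hc hl'; omega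
    · have hlen := h.length_eq
      obtain ⟨x, rest, rfl⟩ := List.exists_cons_of_length_eq_add_one hlen
      have hrest : rest.length = k + 1 := by simpa using hlen
      have restart (hw : pfaRun (step (k := k) (r := r)) (chain 0) w = some sink) (hi : i = 7) :
          4 ^ (k + 1) ≤ v + (w.length + 1) := by
        subst hi
        obtain ⟨y, hy, hl'⟩ := onTape_one hrest (by decide) hl
        obtain rfl : some 0 = y := by simpa [write] using hy
        have := ih (.chain 0 rest (by simp [hrest])) hw hl'
        omega
      rw [pfaRun_cons] at hc
      generalize hL : x :: rest = L at h
      cases h with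
      | chain j t ht =>
        obtain ⟨y, hy, hl'⟩ := onTape_one hrest (by decide) hl
        obtain rfl : some 0 = y := by simpa [write] using hy
        obtain ⟨x', t, rfl⟩ := List.exists_cons_of_length_pos (l := t) (by omega)
        obtain ⟨-, rfl⟩ : x = x' ∧ rest = t ++ List.replicate (j.val + 1) (some 0) := by
          simpa using hL
        rw [List.append_assoc, ← List.replicate_succ'] at hl'
        rw [List.length_cons] at ht
        by_cases hj : j.val < k
        · simp only [step, hj, dite_true] at hc
          have := ih (.chain ⟨j.val + 1, by omega⟩ t (by simp; omega)) hc hl'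
          omega
        · simp only [step, hj, dite_false] at hc
          obtain rfl : t = [] := List.length_eq_zero_iff.1 (by omega)
          have hjk : j.val = k := by omega
          rw [hjk] at hl'
          have := ih (.armed 0) hc hl'
          omega
      | fail l i _ =>
        fin_cases i <;> simp [step, control] at hc
        exact restart hc rfl
      | armed i =>
        obtain ⟨rfl, rfl⟩ : x = some 0 ∧ rest = List.replicate (k + 1) (some 0) := by
          simpa [List.replicate_succ] using hL
        fin_cases i <;> simp [step, control] at hc
        · obtain ⟨y, hy, hl'⟩ := onTape_one hrest (by decide) hl
          obtain rfl : none = y := by simpa [write] using hy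
          have := ih (.carry (List.replicate (k + 1) 0) 0 0 (by simp)) hc (by simpa using hl')
          rw [List.replicate_zero, List.nil_append, ofDigits_replicate_zero] at this
          omega
        · exact restart hc rfl
      | carry U j i hU =>
        fin_cases i <;> simp [step, control] at hc
        · obtain ⟨y, hy, hl'⟩ := onTape_one hrest (by decide) hl
          obtain ⟨rfl, rfl⟩ := write_two hy
          cases U with
          | nil => simp at hL
          | cons d U =>
            obtain ⟨rfl, rfl⟩ : 3 = d ∧
                rest = U.map some ++ none :: List.replicate j (some 0) := by simpa using hL
            have := ih (.carry U (j + 1) 0 (by simp at hU; omega)) hc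
              (by simpa [List.replicate_succ'] using hl')
            simp only [List.replicate_succ', List.append_assoc, List.singleton_append] at this
            omega
        · obtain ⟨y, hy, hl'⟩ := onTape_one hrest (by decide) hl
          obtain ⟨e, he, rfl, rfl⟩ := write_three hy
          cases U with
          | nil => simp at hL
          | cons d U =>
            obtain ⟨rfl, rfl⟩ : e = d ∧
                rest = U.map some ++ none :: List.replicate j (some 0) := by simpa using hL
            have := ih (.copy U (List.replicate j 0 ++ [e + 1]) 0 (by simp at hU ⊢; omega)) hc
              (by simpa using hl')
            simp only [List.append_assoc, List.singleton_append, ofDigits_increment j e he] at this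
            omega
        · obtain ⟨y, hy, -⟩ := onTape_one hrest (by decide) hl
          obtain ⟨rfl, rfl⟩ := write_five hy
          cases U with
          | nil =>
            obtain rfl : j = k + 1 := by simpa using hU
            rw [List.append_nil, ← ofDigits_replicate_three]
            omega
          | cons d U => simp at hL
        · exact restart hc rfl
      | copy U P i hU =>
        fin_cases i <;> simp [step, control] at hc
        · obtain ⟨y, hy, hl'⟩ := onTape_one hrest (by decide) hl
          obtain ⟨e, rfl, rfl⟩ := write_four hy
          cases U with
          | nil => simp at hL
          | cons d U =>
            obtain ⟨rfl, rfl⟩ : e = d ∧ rest = U.map some ++ none :: P.map some := by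
              simpa using hL
            have := ih (.copy U (P ++ [e]) 0 (by simp at hU ⊢; omega)) hc (by simpa using hl')
            simp only [List.append_assoc, List.singleton_append] at this
            omega
        · obtain ⟨y, hy, hl'⟩ := onTape_one hrest (by decide) hl
          obtain ⟨rfl, rfl⟩ := write_five hy
          cases U with
          | nil =>
            obtain rfl : rest = P.map some := by simpa using hL
            have := ih (.carry P 0 0 (by simpa using hU)) hc (by simpa using hl')
            simp only [List.replicate_zero, List.nil_append, List.append_nil] at this ⊢
            omega
          | cons d U => simp at hL
        · exact restart hc rfl

theorem le_length_of_isCareSyncWord {w : List (Fin 2)}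
    (hw : IsCareSyncWord (step (k := k) (r := r)) w) : 4 ^ (k + 1) ≤ w.length := by
  obtain ⟨s, hs⟩ := hw
  obtain rfl : sink = s := by simpa [pfaRun_sink] using hs sink
  simpa using le_length_of_progress (.armed (k := k) (r := r) 0) (hs _) fun q _ => hs q

end LowerBound

section Synchronization

/-- Some word sends every state of `S` to the sink. -/
def Syncs (S : Set (State k r)) : Prop := ∃ w, ∀ q ∈ S, pfaRun step q w = some sink

theorem Syncs.of_word {S S' : Set (State k r)} (u : List (Fin 2)) (h' : Syncs S')
    (h : ∀ q ∈ S, ∃ q' ∈ S', pfaRun step q u = some q') : Syncs S := by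
  obtain ⟨w, hw⟩ := h'
  refine ⟨u ++ w, fun q hq => ?_⟩
  obtain ⟨q', hq', hu⟩ := h q hq
  rw [pfaRun_append, hu]
  exact hw q' hq'

/-- The word of command `i`. -/
def block (i : Fin 8) : List (Fin 2) := List.replicate i.val 0 ++ [1]

theorem pfaRun_block_cell (x : Sym) (p : Fin (k + 1)) (i : Fin 8) :
    pfaRun (step (r := r)) (cell x p) (block i) = step (cell x p) 1 := by
  fin_cases i <;> rfl

theorem pfaRun_block_head (x : Sym) (i : Fin 8) :
    pfaRun (step (k := k) (r := r)) (head x 0) (block i) = step (head x i) 1 := by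
  fin_cases i <;> rfl

theorem pfaRun_block_ctrl (q : Mode) (i : Fin 8) :
    pfaRun (step (k := k) (r := r)) (ctrl q 0) (block i) = control q i := by
  fin_cases i <;> rfl

/-- The active states when the control is `c` and the tape reads `l`. -/
def config (c : State k r) (l : List Sym) : Set (State k r) :=
  {q | q = sink ∨ q = c ∨ OnTape l 0 q}

theorem Syncs.of_command {q : Mode} (i : Fin 8) {c : State k r} {x y : Sym} {l : List Sym}
    (h : Syncs (config c (l ++ [y]))) (hl : l.length = k + 1) (hi : i ≠ 6)
    (hc : control q i = some c) (hy : write i x = some y) :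
    Syncs (config (k := k) (r := r) (ctrl q 0) (x :: l)) := by
  refine h.of_word (block i) ?_
  rintro _ (rfl | rfl | ⟨z, hz⟩ | ⟨z, p, hz⟩)
  · exact ⟨sink, .inl rfl, pfaRun_sink _⟩
  · exact ⟨c, .inr (.inl rfl), (pfaRun_block_ctrl q i).trans hc⟩
  · obtain rfl : x = z := by simpa using hz
    refine ⟨cell y (Fin.last k), .inr (.inr (.cell _ _ ?_)), ?_⟩
    · simp [hl]
    · simp [pfaRun_block_head, step, hi, hy]
  · induction p using Fin.cases with
    | zero =>
      refine ⟨head z 0, .inr (.inr (.head _ ?_)), pfaRun_block_cell _ _ _⟩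
      simpa [List.getElem?_append, hl] using hz
    | succ p =>
      refine ⟨cell z p.castSucc, .inr (.inr (.cell _ _ ?_)), pfaRun_block_cell _ _ _⟩
      simpa [List.getElem?_append, hl] using hz

theorem syncs_unlocked (m : ℕ) :
    Syncs {q : State k r | q = sink ∨ (∃ x, q = head x 0 ∧ 0 < m) ∨
      ∃ x p, q = cell x p ∧ p.val + 1 < m} := by
  induction m with
  | zero => exact ⟨[], by rintro _ (rfl | ⟨x, -, h⟩ | ⟨x, p, -, h⟩) <;> simp_all [pfaRun_nil]⟩
  | succ m ih =>
    refine ih.of_word (block 6) ?_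
    rintro _ (rfl | ⟨x, rfl, h⟩ | ⟨x, p, rfl, h⟩)
    · exact ⟨sink, .inl rfl, pfaRun_sink _⟩
    · exact ⟨sink, .inl rfl, rfl⟩
    · induction p using Fin.cases with
      | zero => exact ⟨head x 0, .inr (.inl ⟨x, rfl, by omega⟩), pfaRun_block_cell _ _ _⟩
      | succ p =>
        exact ⟨cell x p.castSucc, .inr (.inr ⟨x, _, rfl, by simpa using h⟩),
          pfaRun_block_cell _ _ _⟩

theorem syncs_config_sink (l : List Sym) : Syncs (config (k := k) (r := r) sink l) := by
  refine (syncs_unlocked (k + 2)).of_word [] ?_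
  rintro _ (rfl | rfl | ⟨x, -⟩ | ⟨x, p, -⟩)
  · exact ⟨_, .inl rfl, rfl⟩
  · exact ⟨_, .inl rfl, rfl⟩
  · exact ⟨_, .inr (.inl ⟨x, rfl, by omega⟩), rfl⟩
  · exact ⟨_, .inr (.inr ⟨x, p, rfl, by omega⟩), rfl⟩

theorem syncs_copy (U P : List (Fin 4)) (hU : U.length + P.length = k + 1)
    (h : Syncs (config (k := k) (r := r) (ctrl carry 0) ((P ++ U).map some ++ [none]))) :
    Syncs (config (k := k) (r := r) (ctrl copy 0) (U.map some ++ none :: P.map some)) := by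
  induction U generalizing P with
  | nil =>
    rw [List.append_nil] at h
    exact h.of_command 5 (by simpa using hU) (by decide) rfl rfl
  | cons d U ih =>
    have := ih (P ++ [d]) (by simp at hU ⊢; omega) (by simpa using h)
    refine Syncs.of_command (y := some d) 4 ?_ (by simp at hU ⊢; omega) (by decide) rfl rfl
    simpa using this

theorem syncs_carry_of_increment (U : List (Fin 4)) (j : ℕ) (hU : U.length + j = k + 1)
    (h : ∀ V : List (Fin 4), V.length = k + 1 → Nat.ofDigits 4 (V.map Fin.val) =
        Nat.ofDigits 4 ((List.replicate j 3 ++ U).map Fin.val) + 1 →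
      Syncs (config (k := k) (r := r) (ctrl carry 0) (V.map some ++ [none]))) :
    Syncs (config (k := k) (r := r) (ctrl carry 0)
      (U.map some ++ none :: List.replicate j (some 0))) := by
  induction U generalizing j with
  | nil =>
    exact (syncs_config_sink _).of_command (y := none) 5 (by simpa using hU) (by decide) rfl rfl
  | cons d U ih =>
    rw [List.length_cons] at hU
    by_cases hd : d = 3
    · subst hd
      refine Syncs.of_command (y := some 0) 2 ?_ (by simp; omega) (by decide) rfl rfl
      have := ih (j + 1) (by omega) (by simpa [List.replicate_succ'] using h)
      simpa [List.replicate_succ'] using this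
    · refine Syncs.of_command (y := some (d + 1)) 3 ?_ (by simp; omega) (by decide) rfl
        (by simp [write, hd])
      have := syncs_copy U (List.replicate j 0 ++ [d + 1]) (by simp; omega)
        (h _ (by simp; omega) (by simpa using ofDigits_increment j d hd U))
      simpa using this

theorem syncs_carry (U : List (Fin 4)) (hU : U.length = k + 1) :
    Syncs (config (k := k) (r := r) (ctrl carry 0) (U.map some ++ [none])) := by
  have lt (V : List (Fin 4)) (hV : V.length = k + 1) :
      Nat.ofDigits 4 (V.map Fin.val) < 4 ^ (k + 1) := by
    have := Nat.ofDigits_lt_base_pow_length (b := 4) (l := V.map Fin.val) (by decide) (by simp)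
    simpa [hV] using this
  induction hn : 4 ^ (k + 1) - Nat.ofDigits 4 (U.map Fin.val) using Nat.strong_induction_on
    generalizing U with
  | _ n ih =>
    refine syncs_carry_of_increment U 0 hU fun V hV hVU => ih _ ?_ V hV rfl
    have := lt U hU
    rw [List.replicate_zero, List.nil_append] at hVU
    omega

theorem syncs_armed :
    Syncs (config (k := k) (r := r) (ctrl armed 0) (List.replicate (k + 2) (some 0))) := by
  refine Syncs.of_command (y := none) 1 ?_ (List.length_replicate) (by decide) rfl rfl
  simpa using syncs_carry (List.replicate (k + 1) 0) (by simp)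

/-- The active states when at least `j + 1` cells have been erased. -/
def erased (j : Fin (k + 1)) : Set (State k r) :=
  {q | q = sink ∨ q = chain j ∨ (∃ x, q = head x 0) ∨
    ∃ x p, q = cell x p ∧ (k ≤ p.val + j.val → x = some 0)}

theorem syncs_erased (j : Fin (k + 1)) : Syncs (erased (r := r) j) := by
  induction j using Fin.reverseInduction with
  | last =>
    refine syncs_armed.of_word [1] ?_
    rintro _ (rfl | rfl | ⟨x, rfl⟩ | ⟨x, p, rfl, hp⟩)
    · exact ⟨sink, .inl rfl, rfl⟩
    · exact ⟨ctrl armed 0, .inr (.inl rfl), by simp [pfaRun_cons, pfaRun_nil, step]⟩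
    · exact ⟨cell (some 0) (Fin.last k), .inr (.inr (.cell _ _ (by simp))), rfl⟩
    · obtain rfl := hp (by simp)
      induction p using Fin.cases with
      | zero => exact ⟨head (some 0) 0, .inr (.inr (.head _ (by simp))), rfl⟩
      | succ p =>
        exact ⟨cell (some 0) p.castSucc, .inr (.inr (.cell _ _ (by simp))), rfl⟩
  | cast j ih =>
    refine ih.of_word [1] ?_
    rintro _ (rfl | rfl | ⟨x, rfl⟩ | ⟨x, p, rfl, hp⟩)
    · exact ⟨sink, .inl rfl, rfl⟩
    · exact ⟨chain j.succ, .inr (.inl rfl), by simp [pfaRun_cons, pfaRun_nil, step, Fin.succ]⟩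
    · exact ⟨_, .inr (.inr (.inr ⟨some 0, Fin.last k, rfl, fun _ => rfl⟩)), rfl⟩
    · induction p using Fin.cases with
      | zero => exact ⟨head x 0, .inr (.inr (.inl ⟨x, rfl⟩)), rfl⟩
      | succ p =>
        refine ⟨_, .inr (.inr (.inr ⟨x, p.castSucc, rfl, fun h => hp ?_⟩)), rfl⟩
        simp at h ⊢
        omega

theorem exists_isCareSyncWord : ∃ w, IsCareSyncWord (step (k := k) (r := r)) w := by
  have : Syncs (Set.univ : Set (State k r)) := by
    refine (syncs_erased 0).of_word (block 7) ?_
    rintro (⟨x, p⟩ | ⟨x, i⟩ | ⟨q, i⟩ | j | _ | e) -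
    · induction p using Fin.cases with
      | zero => exact ⟨head x 0, .inr (.inr (.inl ⟨x, rfl⟩)), rfl⟩
      | succ p =>
        refine ⟨_, .inr (.inr (.inr ⟨x, p.castSucc, rfl, fun h => ?_⟩)), rfl⟩
        simp at h
        omega
    · exact ⟨_, .inr (.inr (.inr ⟨some 0, Fin.last k, rfl, fun _ => rfl⟩)),
        by fin_cases i <;> rfl⟩
    · exact ⟨chain 0, .inr (.inl rfl), by fin_cases i <;> cases q <;> rfl⟩
    · exact ⟨chain 0, .inr (.inl rfl), rfl⟩
    · exact ⟨sink, .inl rfl, rfl⟩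
    · exact ⟨sink, .inl rfl, rfl⟩
  obtain ⟨w, hw⟩ := this
  exact ⟨w, sink, fun q => hw q trivial⟩

end Synchronization

/-- The states as a disjoint union. -/
def stateEquiv : State k r ≃
    (Sym × Fin (k + 1)) ⊕ (Sym × Fin 8) ⊕ (Fin 4 × Fin 8) ⊕ Fin (k + 1) ⊕ Unit ⊕ Fin r where
  toFun
    | cell x p => .inl (x, p)
    | head x i => .inr (.inl (x, i))
    | ctrl armed i => .inr (.inr (.inl (0, i)))
    | ctrl carry i => .inr (.inr (.inl (1, i)))
    | ctrl copy i => .inr (.inr (.inl (2, i)))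
    | ctrl fail i => .inr (.inr (.inl (3, i)))
    | chain j => .inr (.inr (.inr (.inl j)))
    | sink => .inr (.inr (.inr (.inr (.inl ()))))
    | extra e => .inr (.inr (.inr (.inr (.inr e))))
  invFun
    | .inl (x, p) => cell x p
    | .inr (.inl (x, i)) => head x i
    | .inr (.inr (.inl (0, i))) => ctrl armed i
    | .inr (.inr (.inl (1, i))) => ctrl carry i
    | .inr (.inr (.inl (2, i))) => ctrl copy i
    | .inr (.inr (.inl (3, i))) => ctrl fail i
    | .inr (.inr (.inr (.inl j))) => chain j
    | .inr (.inr (.inr (.inr (.inl _)))) => sink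
    | .inr (.inr (.inr (.inr (.inr e)))) => extra e
  left_inv := by rintro (_ | _ | ⟨_ | _ | _ | _, _⟩ | _ | _ | _) <;> rfl
  right_inv := by
    rintro (_ | _ | ⟨q, _⟩ | _ | _ | _)
    on_goal 3 => fin_cases q
    all_goals rfl

theorem nonempty_state_equiv_fin : Nonempty (State k r ≃ Fin (6 * k + 79 + r)) :=
  ⟨stateEquiv.trans (Fintype.equivFinOfCardEq (by simp; omega))⟩

end CounterPFA

/-- There is a sequence of carefully synchronizing PFAs with two symbols, `n` states and
shortest carefully synchronizing word length `Ω(2^{n/3}/n^{3/2})`. -/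
theorem exists_binary_pfa_exp : ∃ c : ℝ, 0 < c ∧ ∃ N : ℕ, ∀ n : ℕ, N ≤ n →
    ∃ δ : Fin n → Fin 2 → Option (Fin n),
      (∃ w : List (Fin 2), IsCareSyncWord δ w) ∧
      ∀ w : List (Fin 2), IsCareSyncWord δ w →
        c * (2 : ℝ) ^ ((n : ℝ) / 3) / (n : ℝ) ^ ((3 : ℝ) / 2) ≤ (w.length : ℝ) := by
  refine ⟨2 ^ (-26 : ℝ), by positivity, 79, fun n hn => ?_⟩
  obtain ⟨k, r, hr, rfl⟩ : ∃ k r, r < 6 ∧ n = 6 * k + 79 + r :=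
    ⟨(n - 79) / 6, (n - 79) % 6, Nat.mod_lt _ (by decide), by omega⟩
  obtain ⟨e⟩ := CounterPFA.nonempty_state_equiv_fin (k := k) (r := r)
  refine ⟨pfaMap e CounterPFA.step, ?_, fun w hw => ?_⟩
  · simpa only [isCareSyncWord_pfaMap] using CounterPFA.exists_isCareSyncWord
  have hlen := CounterPFA.le_length_of_isCareSyncWord ((isCareSyncWord_pfaMap e _ w).1 hw)
  have hn1 : (1 : ℝ) ≤ ((6 * k + 79 + r : ℕ) : ℝ) := by exact_mod_cast (by omega)
  have hr5 : (r : ℝ) ≤ 5 := by exact_mod_cast Nat.le_of_lt_succ hr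
  calc (2 : ℝ) ^ (-26 : ℝ) * 2 ^ (((6 * k + 79 + r : ℕ) : ℝ) / 3) /
        ((6 * k + 79 + r : ℕ) : ℝ) ^ ((3 : ℝ) / 2)
      ≤ 2 ^ (-26 : ℝ) * 2 ^ (((6 * k + 79 + r : ℕ) : ℝ) / 3) :=
        div_le_self (by positivity) (Real.one_le_rpow hn1 (by norm_num))
    _ = 2 ^ (-26 + ((6 * k + 79 + r : ℕ) : ℝ) / 3) := (Real.rpow_add two_pos _ _).symm
    _ ≤ 2 ^ ((2 * (k + 1) : ℕ) : ℝ) := by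
        refine Real.rpow_le_rpow_of_exponent_le one_le_two ?_
        push_cast
        linarith
    _ = ((4 ^ (k + 1) : ℕ) : ℝ) := by
        rw [Real.rpow_natCast, pow_mul]
        norm_num
    _ ≤ w.length := by exact_mod_cast hlen
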